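/- Let X be a vertex, λ a complex number with Re λ > 0, and α_1,…,α_N > 0. Then the function x ↦ e^{−Re(λ) f_0(x)} · (∏_{j=1}^N |f_j(x)|^{α_j}) · (∏_{j∈X} |f_j(x)|)^{−1} is Lebesgue-integrable both on every arrangement domain Δ ∈ 𝒟⁺ and on the cone C⁺_X. -/

import Mathlib

open Set MeasureTheory Filter
open scoped Classical Real

noncomputable section

namespace HypArr

variable {k N : ℕ}

/-- The hyperplane `H j = f j ⁻¹ (0)` of the `j`-th affine form. -/
def Hyp (f : Fin N → ((Fin k → ℝ) →ᵃ[ℝ] ℝ)) (j : Fin N) : Set (Fin k → ℝ) :=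
  {x | f j x = 0}

/-- The complement `ℝ^k ∖ (H 1 ∪ ⋯ ∪ H N)` of the union of all the hyperplanes. -/
def HypCompl (f : Fin N → ((Fin k → ℝ) →ᵃ[ℝ] ℝ)) : Set (Fin k → ℝ) :=
  {x | ∀ j, f j x ≠ 0}

/-- `Δ` is an arrangement domain: a connected component of `ℝ^k ∖ (H 1 ∪ ⋯ ∪ H N)`. -/
def IsDomain (f : Fin N → ((Fin k → ℝ) →ᵃ[ℝ] ℝ)) (Δ : Set (Fin k → ℝ)) : Prop :=
  ∃ x ∈ HypCompl f, Δ = connectedComponentIn (HypCompl f) x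

/-- The hyperplanes `H 1, …, H N` are in generic position in `ℝ^k`: they are pairwise
distinct, any `k` of them intersect in exactly one point, and any `k+1` of them have
empty intersection. -/
def Generic (f : Fin N → ((Fin k → ℝ) →ᵃ[ℝ] ℝ)) : Prop :=
  (∀ i j : Fin N, i ≠ j → Hyp f i ≠ Hyp f j) ∧
  (∀ S : Finset (Fin N), S.card = k → ∃! x : Fin k → ℝ, ∀ j ∈ S, f j x = 0) ∧
  (∀ S : Finset (Fin N), S.card = k + 1 → ¬ ∃ x : Fin k → ℝ, ∀ j ∈ S, f j x = 0)

/-- `X` is a vertex of the arrangement. -/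
def IsVertex (f : Fin N → ((Fin k → ℝ) →ᵃ[ℝ] ℝ)) (X : Fin k → ℝ) : Prop :=
  ∃ S : Finset (Fin N), S.card = k ∧ ∀ j ∈ S, f j X = 0

/-- `X` is the vertex of the arrangement with index set `S`. -/
def IsVertexOf (f : Fin N → ((Fin k → ℝ) →ᵃ[ℝ] ℝ)) (S : Finset (Fin N))
    (X : Fin k → ℝ) : Prop :=
  S.card = k ∧ ∀ j ∈ S, f j X = 0

/-- The linear form `f0` is in general position with respect to the arrangement:
it takes pairwise distinct values at the vertices and is nonconstant on each
line `L_U = ∩_{j ∈ U} H j` for `U` of cardinality `k - 1`. -/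
def GenericLin (f : Fin N → ((Fin k → ℝ) →ᵃ[ℝ] ℝ)) (f0 : (Fin k → ℝ) →ₗ[ℝ] ℝ) : Prop :=
  (∀ X Y : Fin k → ℝ, IsVertex f X → IsVertex f Y → X ≠ Y → f0 X ≠ f0 Y) ∧
  ∀ U : Finset (Fin N), U.card = k - 1 →
    ∃ x y : Fin k → ℝ, (∀ j ∈ U, f j x = 0) ∧ (∀ j ∈ U, f j y = 0) ∧ f0 x ≠ f0 y

/-- `C` is a connected component of `ℝ^k ∖ ⋃_{j ∈ S} H j`. -/
def IsConeComp (f : Fin N → ((Fin k → ℝ) →ᵃ[ℝ] ℝ)) (S : Finset (Fin N))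
    (C : Set (Fin k → ℝ)) : Prop :=
  ∃ y, (∀ j ∈ S, f j y ≠ 0) ∧ C = connectedComponentIn {z | ∀ j ∈ S, f j z ≠ 0} y

/-- `C` is the cone `C⁺_X` of the vertex `X` with index set `S`: the unique connected
component of `ℝ^k ∖ ⋃_{j ∈ S} H j` on which `f0 - f0 X` is everywhere positive. -/
def IsPosCone (f : Fin N → ((Fin k → ℝ) →ᵃ[ℝ] ℝ)) (f0 : (Fin k → ℝ) →ₗ[ℝ] ℝ)
    (S : Finset (Fin N)) (X : Fin k → ℝ) (C : Set (Fin k → ℝ)) : Prop :=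
  IsConeComp f S C ∧ ∀ y ∈ C, f0 X < f0 y

/-- `C` is the cone `C⁻_X` of the vertex `X` with index set `S`: the unique connected
component of `ℝ^k ∖ ⋃_{j ∈ S} H j` on which `f0 - f0 X` is everywhere negative. -/
def IsNegCone (f : Fin N → ((Fin k → ℝ) →ᵃ[ℝ] ℝ)) (f0 : (Fin k → ℝ) →ₗ[ℝ] ℝ)
    (S : Finset (Fin N)) (X : Fin k → ℝ) (C : Set (Fin k → ℝ)) : Prop :=
  IsConeComp f S C ∧ ∀ y ∈ C, f0 y < f0 X

/-- `Δ` is the domain `Δ_X` of the vertex `X`: the unique arrangement domain whose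
closure contains `X` and on which `f0 - f0 X > 0`. -/
def IsDomOf (f : Fin N → ((Fin k → ℝ) →ᵃ[ℝ] ℝ)) (f0 : (Fin k → ℝ) →ₗ[ℝ] ℝ)
    (X : Fin k → ℝ) (Δ : Set (Fin k → ℝ)) : Prop :=
  IsDomain f Δ ∧ X ∈ closure Δ ∧ ∀ y ∈ Δ, f0 X < f0 y

/-- `Δ` is the domain `Δ⁻_X` of the vertex `X`: the unique arrangement domain whose
closure contains `X` and on which `f0 - f0 X < 0`. -/
def IsNegDomOf (f : Fin N → ((Fin k → ℝ) →ᵃ[ℝ] ℝ)) (f0 : (Fin k → ℝ) →ₗ[ℝ] ℝ)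
    (X : Fin k → ℝ) (Δ : Set (Fin k → ℝ)) : Prop :=
  IsDomain f Δ ∧ X ∈ closure Δ ∧ ∀ y ∈ Δ, f0 y < f0 X

/-- `Δ` belongs to `𝒟⁺`: it is an arrangement domain on which `f0` is bounded
from below. -/
def MemDplus (f : Fin N → ((Fin k → ℝ) →ᵃ[ℝ] ℝ)) (f0 : (Fin k → ℝ) →ₗ[ℝ] ℝ)
    (Δ : Set (Fin k → ℝ)) : Prop :=
  IsDomain f Δ ∧ BddBelow (f0 '' Δ)

/-- `Δ` belongs to `𝒟⁻`: it is an arrangement domain on which `f0` is bounded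
from above. -/
def MemDminus (f : Fin N → ((Fin k → ℝ) →ᵃ[ℝ] ℝ)) (f0 : (Fin k → ℝ) →ₗ[ℝ] ℝ)
    (Δ : Set (Fin k → ℝ)) : Prop :=
  IsDomain f Δ ∧ BddAbove (f0 '' Δ)

/-- The set `W` (a hyperplane) separates `S` from `T`: they lie in different connected
components of the complement of `W`. -/
def Separates {α : Type*} [TopologicalSpace α] (W S T : Set α) : Prop :=
  ∃ x ∈ S, ∃ y ∈ T, S ⊆ connectedComponentIn Wᶜ x ∧ T ⊆ connectedComponentIn Wᶜ y ∧
    connectedComponentIn Wᶜ x ≠ connectedComponentIn Wᶜ y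

/-- The index set of `ℋ(Δ, Δ')`, the set of hyperplanes separating `Δ` from `Δ'`. -/
def SepSet (f : Fin N → ((Fin k → ℝ) →ᵃ[ℝ] ℝ)) (Δ Δ' : Set (Fin k → ℝ)) :
    Finset (Fin N) :=
  Finset.univ.filter fun j => Separates (Hyp f j) Δ Δ'

lemma lin_add (g : (Fin k → ℝ) →ᵃ[ℝ] ℝ) (x v : Fin k → ℝ) : g (x + v) = g x + g.linear v := by
  have := g.map_vadd x v
  simp only [vadd_eq_add] at this
  rw [add_comm x v, this, add_comm]

lemma ker_zero (f : Fin N → ((Fin k → ℝ) →ᵃ[ℝ] ℝ)) (hf : Generic f)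
    (S : Finset (Fin N)) (hS : S.card = k) (v : Fin k → ℝ)
    (hv : ∀ j ∈ S, (f j).linear v = 0) : v = 0 := by
  obtain ⟨x, hx, hu⟩ := hf.2.1 S hS
  have := hu (x + v) (fun j hj => by rw [lin_add, hx j hj, hv j hj, add_zero])
  simpa using this

lemma line_ne (hk : 1 ≤ k) (hkN : k ≤ N) (f : Fin N → ((Fin k → ℝ) →ᵃ[ℝ] ℝ)) (hf : Generic f)
    (f0 : (Fin k → ℝ) →ₗ[ℝ] ℝ) (hf0 : GenericLin f f0)
    (U : Finset (Fin N)) (hU : U.card = k - 1) (v : Fin k → ℝ) (hv0 : v ≠ 0)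
    (hv : ∀ j ∈ U, (f j).linear v = 0) : f0 v ≠ 0 := by
  intro h0
  obtain ⟨x, y, hx, hy, hxy⟩ := hf0.2 U hU
  obtain ⟨i, hi⟩ : ∃ i, i ∉ U := by
    by_contra h
    push Not at h
    have : U = Finset.univ := by ext; simp [h]
    rw [this, Finset.card_univ, Fintype.card_fin] at hU
    omega
  have hc : (insert i U).card = k := by rw [Finset.card_insert_of_notMem hi]; omega
  have hw : ∀ j ∈ U, (f j).linear (x - y) = 0 := by
    intro j hj
    have := lin_add (f j) y (x - y)
    rw [add_sub_cancel, hx j hj, hy j hj] at this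
    linarith
  have hiv : (f i).linear v ≠ 0 := by
    intro h
    apply hv0
    apply ker_zero f hf _ hc
    intro j hj
    rcases Finset.mem_insert.1 hj with rfl | hj
    · exact h
    · exact hv j hj
  have : (x - y) - ((f i).linear (x - y) / (f i).linear v) • v = 0 := by
    apply ker_zero f hf _ hc
    intro j hj
    rw [map_sub, map_smul, smul_eq_mul]
    rcases Finset.mem_insert.1 hj with rfl | hj
    · field_simp; ring
    · rw [hw j hj, hv j hj]; ring
  have h2 := congrArg f0 this
  rw [map_sub, map_smul, h0, map_sub] at h2
  simp only [smul_zero, sub_zero, map_zero] at h2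
  exact hxy (by linarith)

lemma exists_w (f : Fin N → ((Fin k → ℝ) →ᵃ[ℝ] ℝ)) (Z : Finset (Fin N)) (hZ : Z.card + 1 < k)
    (v : Fin k → ℝ) (hv : v ≠ 0) :
    ∃ w : Fin k → ℝ, (∀ j ∈ Z, (f j).linear w = 0) ∧ ∀ m : ℝ, w - m • v ≠ 0 := by
  obtain ⟨i, hi⟩ : ∃ i, v i ≠ 0 := by
    by_contra h
    push Not at h
    exact hv (funext h)
  let A : (Fin k → ℝ) →ₗ[ℝ] ((Z → ℝ) × ℝ) :=
    (LinearMap.pi (fun j : Z => (f j).linear)).prod (LinearMap.proj i)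
  have hA : LinearMap.ker A ≠ ⊥ := by
    apply LinearMap.ker_ne_bot_of_finrank_lt
    simp
    omega
  obtain ⟨w, hw, hw0⟩ := (Submodule.ne_bot_iff _).1 hA
  have hw' : A w = 0 := hw
  have h1 := congrArg Prod.fst hw'
  have h2 : w i = 0 := congrArg Prod.snd hw'
  refine ⟨w, fun j hj => congrFun h1 ⟨j, hj⟩, fun m hm => ?_⟩
  have h3 := congrFun hm i
  simp [h2, hi] at h3
  rw [h3] at hm
  simp at hm
  exact hw0 hm

lemma pos_on_rec (hk : 1 ≤ k) (hkN : k ≤ N) (f : Fin N → ((Fin k → ℝ) →ᵃ[ℝ] ℝ)) (hf : Generic f)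
    (f0 : (Fin k → ℝ) →ₗ[ℝ] ℝ) (hf0 : GenericLin f f0)
    (S : Finset (Fin N)) (hS : k ≤ S.card) (p : Fin N → ℝ) (hp : ∀ j ∈ S, p j ≠ 0)
    (hR : ∀ v : Fin k → ℝ, (∀ j ∈ S, 0 ≤ p j * (f j).linear v) → 0 ≤ f0 v) :
    ∀ n : ℕ, ∀ v : Fin k → ℝ, (∀ j ∈ S, 0 ≤ p j * (f j).linear v) → v ≠ 0 →
      n = k - (S.filter (fun j => (f j).linear v = 0)).card → f0 v ≠ 0 := by
  intro n
  induction n using Nat.strong_induction_on with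
  | _ n ih =>
  intro v hv hv0 hn h0
  set Z := S.filter (fun j => (f j).linear v = 0) with hZ
  by_cases hc : k - 1 ≤ Z.card
  · obtain ⟨U, hUZ, hU⟩ := Finset.exists_subset_card_eq hc
    refine line_ne hk hkN f hf f0 hf0 U hU v hv0 (fun j hj => ?_) h0
    exact (Finset.mem_filter.1 (hUZ hj)).2
  · push Not at hc
    obtain ⟨w, hw, hwv⟩ := exists_w f Z (by omega) v hv0
    have hne : (S.filter (fun j => (f j).linear v ≠ 0)).Nonempty := by
      by_contra h
      rw [Finset.not_nonempty_iff_eq_empty, Finset.filter_eq_empty_iff] at h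
      have : S ⊆ Z := fun j hj => Finset.mem_filter.2 ⟨hj, by simpa using h hj⟩
      have := Finset.card_le_card this
      omega
    have key : ∀ w : Fin k → ℝ, (∀ j ∈ Z, (f j).linear w = 0) → ∃ m : ℝ,
        (∀ j ∈ S, 0 ≤ p j * (f j).linear (w - m • v)) ∧
        ∃ i ∈ S, i ∉ Z ∧ (f i).linear (w - m • v) = 0 := by
      intro w hw
      obtain ⟨i, hi, him⟩ := Finset.exists_min_image _
        (fun j => (f j).linear w / (f j).linear v) hne
      rw [Finset.mem_filter] at hi
      refine ⟨(f i).linear w / (f i).linear v, fun j hj => ?_, i, hi.1, ?_, ?_⟩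
      · rw [map_sub, map_smul, smul_eq_mul]
        by_cases hjv : (f j).linear v = 0
        · rw [hw j (Finset.mem_filter.2 ⟨hj, hjv⟩), hjv]; simp
        · have h1 := him j (Finset.mem_filter.2 ⟨hj, hjv⟩)
          have h2 := hv j hj
          have h3 : (f j).linear w = ((f j).linear w / (f j).linear v) * (f j).linear v := by
            field_simp
          have h4 := mul_nonneg h2 (sub_nonneg.2 h1)
          calc (0:ℝ) ≤ _ := h4
            _ = p j * (((f j).linear w / (f j).linear v) * (f j).linear v
                  - (f i).linear w / (f i).linear v * (f j).linear v) := by ring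
            _ = _ := by rw [← h3]
      · intro h
        exact hi.2 (Finset.mem_filter.1 h).2
      · rw [map_sub, map_smul, smul_eq_mul]
        have := hi.2
        field_simp
        ring
    obtain ⟨m, hm, i, hiS, hiZ, hi⟩ := key w hw
    obtain ⟨m', hm', -⟩ := key (-w) (fun j hj => by rw [map_neg, hw j hj, neg_zero])
    have e1 := hR _ hm
    have e2 := hR _ hm'
    rw [map_sub, map_smul, h0] at e1 e2
    rw [map_neg] at e2
    simp only [smul_zero, sub_zero] at e1 e2
    have e3 : f0 w = 0 := by linarith
    have hlt : Z.card < (S.filter (fun j => (f j).linear (w - m • v) = 0)).card := by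
      apply Finset.card_lt_card
      rw [Finset.ssubset_iff_of_subset]
      · exact ⟨i, Finset.mem_filter.2 ⟨hiS, hi⟩, hiZ⟩
      · intro j hj
        refine Finset.mem_filter.2 ⟨(Finset.mem_filter.1 hj).1, ?_⟩
        rw [map_sub, map_smul, hw j hj, (Finset.mem_filter.1 hj).2]; simp
    refine ih _ ?_ (w - m • v) hm (hwv m) rfl ?_
    · omega
    · rw [map_sub, map_smul, h0, e3]; simp

lemma coercive (hk : 1 ≤ k) (hkN : k ≤ N) (f : Fin N → ((Fin k → ℝ) →ᵃ[ℝ] ℝ)) (hf : Generic f)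
    (f0 : (Fin k → ℝ) →ₗ[ℝ] ℝ) (hf0 : GenericLin f f0)
    (S : Finset (Fin N)) (hS : k ≤ S.card) (y : Fin k → ℝ) (hy : ∀ j ∈ S, f j y ≠ 0)
    (b : ℝ) (hb : ∀ x ∈ connectedComponentIn {z | ∀ j ∈ S, f j z ≠ 0} y, b ≤ f0 x) :
    ∃ c C : ℝ, 0 < c ∧ ∀ x ∈ connectedComponentIn {z | ∀ j ∈ S, f j z ≠ 0} y,
      c * ‖x‖ - C ≤ f0 x := by
  have hyT : y ∈ {z : Fin k → ℝ | ∀ j ∈ S, f j z ≠ 0} := hy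
  have hR : ∀ v : Fin k → ℝ, (∀ j ∈ S, 0 ≤ f j y * (f j).linear v) → 0 ≤ f0 v := by
    intro v hv
    have hmem : ∀ t : ℝ, 0 ≤ t →
        y + t • v ∈ connectedComponentIn {z : Fin k → ℝ | ∀ j ∈ S, f j z ≠ 0} y := by
      intro t ht
      have hpre : IsPreconnected ((fun t : ℝ => y + t • v) '' Ici 0) :=
        isPreconnected_Ici.image _ (by fun_prop)
      refine hpre.subset_connectedComponentIn ⟨0, by simp, by simp⟩ ?_ ⟨t, ht, rfl⟩
      rintro _ ⟨t, ht, rfl⟩ j hj h0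
      simp only [lin_add, map_smul, smul_eq_mul] at h0
      have h1 := mul_nonneg (mem_Ici.1 ht) (hv j hj)
      have h2 : 0 < f j y * f j y := mul_self_pos.2 (hy j hj)
      have h3 : f j y * (f j y + t * (f j).linear v) = 0 := by rw [h0, mul_zero]
      nlinarith
    by_contra hneg
    push Not at hneg
    have h1 := hb _ (hmem (|f0 y - b| / (-f0 v) + 1) (by
      have : 0 ≤ |f0 y - b| / (-f0 v) := div_nonneg (abs_nonneg _) (by linarith)
      linarith))
    rw [map_add, map_smul, smul_eq_mul] at h1
    have h2 : (|f0 y - b| / (-f0 v) + 1) * f0 v = -|f0 y - b| + f0 v := by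
      field_simp [hneg.ne]
    rw [h2] at h1
    linarith [le_abs_self (f0 y - b)]
  have hsign : ∀ x ∈ connectedComponentIn {z : Fin k → ℝ | ∀ j ∈ S, f j z ≠ 0} y,
      ∀ j ∈ S, 0 ≤ f j y * f j x := by
    intro x hx j hj
    by_contra hneg
    push Not at hneg
    have hcont : Continuous (fun z => f j y * f j z) :=
      continuous_const.mul (f j).continuous_of_finiteDimensional
    have hpre := (isPreconnected_connectedComponentIn
      (F := {z : Fin k → ℝ | ∀ j ∈ S, f j z ≠ 0}) (x := y)).image _ hcont.continuousOn
    have := hpre.Icc_subset ⟨x, hx, rfl⟩ ⟨y, mem_connectedComponentIn hyT, rfl⟩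
      (show (0:ℝ) ∈ Icc _ _ from ⟨hneg.le, mul_self_nonneg _⟩)
    obtain ⟨z, hz, hz0⟩ := this
    have hz' := connectedComponentIn_subset _ _ hz j hj
    rcases mul_eq_zero.1 hz0 with h | h
    · exact hy j hj h
    · exact hz' h
  let g : (Fin k → ℝ) → ℝ := fun v => max (f0 v) 0 + ∑ j ∈ S, max (-(f j y * (f j).linear v)) 0
  have hgc : Continuous g := by
    have h0 : Continuous f0 := f0.continuous_of_finiteDimensional
    have hj : ∀ j, Continuous (f j).linear := fun j => (f j).linear.continuous_of_finiteDimensional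
    fun_prop
  have hgpos : ∀ v, v ≠ 0 → 0 < g v := by
    intro v hv
    have hn1 : 0 ≤ max (f0 v) 0 := le_max_right _ _
    have hn2 : ∀ j ∈ S, 0 ≤ max (-(f j y * (f j).linear v)) 0 := fun j _ => le_max_right _ _
    have hn3 := Finset.sum_nonneg hn2
    by_contra hneg
    have hz : g v = 0 := le_antisymm (not_lt.1 hneg) (add_nonneg hn1 hn3)
    have hz' : max (f0 v) 0 + ∑ j ∈ S, max (-(f j y * (f j).linear v)) 0 = 0 := hz
    have e1 : max (f0 v) 0 = 0 := by linarith
    have e2 : ∑ j ∈ S, max (-(f j y * (f j).linear v)) 0 = 0 := by linarith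
    rw [Finset.sum_eq_zero_iff_of_nonneg hn2] at e2
    have e3 : ∀ j ∈ S, 0 ≤ f j y * (f j).linear v := by
      intro j hj
      have := max_eq_right_iff.1 (e2 j hj)
      linarith
    have e4 := hR v e3
    have e5 := max_eq_right_iff.1 e1
    exact pos_on_rec hk hkN f hf f0 hf0 S hS (fun j => f j y) hy hR _ v e3 hv rfl
      (le_antisymm e5 e4)
  have hghom : ∀ (t : ℝ) (v : Fin k → ℝ), 0 ≤ t → g (t • v) = t * g v := by
    intro t v ht
    simp only [g, map_smul, smul_eq_mul, mul_add, Finset.mul_sum]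
    congr 1
    · rw [mul_max_of_nonneg _ _ ht, mul_zero]
    · refine Finset.sum_congr rfl fun j _ => ?_
      rw [mul_max_of_nonneg _ _ ht, mul_zero]
      congr 1
      ring
  have hnt : Nontrivial (Fin k → ℝ) := by
    haveI : Nonempty (Fin k) := ⟨⟨0, hk⟩⟩
    infer_instance
  obtain ⟨v0, hv0, hmin⟩ := (isCompact_sphere (0 : Fin k → ℝ) 1).exists_isMinOn
    (NormedSpace.sphere_nonempty.2 zero_le_one) hgc.continuousOn
  have hv00 : v0 ≠ 0 := by
    rintro rfl
    simp at hv0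
  have hglow : ∀ v, g v0 * ‖v‖ ≤ g v := by
    intro v
    by_cases hv : v = 0
    · subst hv
      have := hghom 0 0 le_rfl
      simp at this
      simp [this]
    · have hnv : 0 < ‖v‖ := norm_pos_iff.2 hv
      have h1 : g v0 ≤ g (‖v‖⁻¹ • v) := hmin (by
        simp [norm_smul, hnv.ne'])
      rw [hghom _ _ (by positivity)] at h1
      rw [inv_mul_eq_div, le_div_iff₀ hnv] at h1
      exact h1
  refine ⟨g v0, |b| + ∑ j ∈ S, |f j y * f j 0|, hgpos v0 hv00, fun x hx => ?_⟩
  have h1 := hglow x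
  have h2 : max (f0 x) 0 ≤ f0 x + |b| := by
    have := hb x hx
    have := neg_abs_le b
    have := abs_nonneg b
    apply max_le <;> linarith
  have h3 : ∑ j ∈ S, max (-(f j y * (f j).linear x)) 0 ≤ ∑ j ∈ S, |f j y * f j 0| := by
    apply Finset.sum_le_sum
    intro j hj
    apply max_le _ (abs_nonneg _)
    have e := lin_add (f j) 0 x
    rw [zero_add] at e
    have := hsign x hx j hj
    rw [e, mul_add] at this
    linarith [le_abs_self (f j y * f j 0)]
  have h4 : g x = max (f0 x) 0 + ∑ j ∈ S, max (-(f j y * (f j).linear x)) 0 := rfl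
  linarith

lemma int1 (α δ : ℝ) (hα : 0 < α) (hδ : 0 < δ) :
    Integrable (fun y : ℝ => Real.exp (-δ * |y|) * |y| ^ α * |y|⁻¹) := by
  have h : IntegrableOn (fun y : ℝ => Real.exp (-δ * y) * y ^ α * y⁻¹) (Ioi 0) := by
    have := integrableOn_rpow_mul_exp_neg_mul_rpow (p := 1) (s := α - 1) (b := δ)
      (by linarith) one_pos hδ
    refine this.congr_fun (fun y hy => ?_) measurableSet_Ioi
    have hy' : (0:ℝ) < y := hy
    simp only [Real.rpow_one]
    rw [Real.rpow_sub hy', Real.rpow_one]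
    field_simp
  have hp : IntegrableOn (fun y : ℝ => Real.exp (-δ * |y|) * |y| ^ α * |y|⁻¹) (Ioi 0) := by
    refine h.congr_fun (fun y hy => ?_) measurableSet_Ioi
    simp only [abs_of_pos (mem_Ioi.1 hy)]
  have hn : IntegrableOn (fun y : ℝ => Real.exp (-δ * |y|) * |y| ^ α * |y|⁻¹) (Iic 0) := by
    rw [integrableOn_Iic_iff_integrableOn_Iio]
    have h1 : IntegrableOn (fun y : ℝ => Real.exp (-δ * |y|) * |y| ^ α * |y|⁻¹) (Ioi (-0)) := by
      simpa using hp
    have h2 := h1.comp_neg_Iio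
    simpa only [abs_neg] using h2
  have := hn.union hp
  rwa [Iic_union_Ioi, integrableOn_univ] at this

lemma rpow_bd (α δ : ℝ) (hα : 0 < α) (hδ : 0 < δ) :
    ∃ K : ℝ, 0 ≤ K ∧ ∀ s : ℝ, 0 ≤ s → Real.exp (-δ * s) * s ^ α ≤ K := by
  refine ⟨((δ / α)⁻¹) ^ α, by positivity, fun s hs => ?_⟩
  have h1 : (δ / α) * s ≤ Real.exp ((δ / α) * s) := by
    linarith [Real.add_one_le_exp ((δ / α) * s)]
  have h2 : s ≤ (δ / α)⁻¹ * Real.exp ((δ / α) * s) := by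
    rw [inv_mul_eq_div, le_div_iff₀ (by positivity)]; linarith
  have h3 := Real.rpow_le_rpow hs h2 hα.le
  rw [Real.mul_rpow (by positivity) (Real.exp_pos _).le, ← Real.exp_mul] at h3
  have h4 : δ / α * s * α = δ * s := by field_simp
  rw [h4] at h3
  calc _ ≤ Real.exp (-δ * s) * (((δ / α)⁻¹) ^ α * Real.exp (δ * s)) := by gcongr
    _ = ((δ / α)⁻¹) ^ α * (Real.exp (-δ * s) * Real.exp (δ * s)) := by ring
    _ = _ := by rw [← Real.exp_add]; simp

lemma int_prod (f : Fin N → ((Fin k → ℝ) →ᵃ[ℝ] ℝ)) (hf : Generic f)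
    (S : Finset (Fin N)) (X : Fin k → ℝ) (hX : IsVertexOf f S X)
    (h : Fin N → ℝ → ℝ) (hh : ∀ j, Integrable (h j)) :
    Integrable (fun x : Fin k → ℝ => ∏ j ∈ S, h j (f j x)) := by
  obtain ⟨hS, hX⟩ := hX
  let e : Fin k ≃ S := (S.equivFinOfCardEq hS).symm
  let L : (Fin k → ℝ) →ₗ[ℝ] (Fin k → ℝ) := LinearMap.pi (fun i => (f (e i)).linear)
  have hLi : Function.Injective L := by
    rw [← LinearMap.ker_eq_bot, LinearMap.ker_eq_bot']
    intro v hv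
    apply ker_zero f hf S hS
    intro j hj
    have := congrFun hv (e.symm ⟨j, hj⟩)
    simpa [L] using this
  have hdet : LinearMap.det L ≠ 0 := by
    intro h0
    exact (LinearMap.bot_lt_ker_of_det_eq_zero h0).ne' (LinearMap.ker_eq_bot.2 hLi)
  have hG : Integrable (fun y : Fin k → ℝ => ∏ i, h (e i) (y i)) :=
    Integrable.fintype_prod (fun i => hh (e i))
  have hGL : Integrable (fun x : Fin k → ℝ => ∏ i, h (e i) (L x i)) := by
    have hmap := Measure.map_linearMap_addHaar_eq_smul_addHaar
      (volume : Measure (Fin k → ℝ)) hdet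
    have h1 : Integrable (fun y : Fin k → ℝ => ∏ i, h (e i) (y i))
        (Measure.map L volume) := by
      rw [hmap]
      exact hG.smul_measure ENNReal.ofReal_ne_top
    exact h1.comp_measurable L.continuous_of_finiteDimensional.measurable
  have h2 := hGL.comp_sub_right X
  refine h2.congr (Eventually.of_forall fun x => ?_)
  have h3 : ∀ i, L (x - X) i = f (e i) x := by
    intro i
    have := lin_add (f (e i)) X (x - X)
    rw [add_sub_cancel, hX _ (e i).2, zero_add] at this
    exact this.symm
  simp only [h3]
  rw [← Finset.prod_coe_sort S]
  exact e.prod_comp (fun j : S => h j (f j x))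

lemma aff_bd (hN : 1 ≤ N) (f : Fin N → ((Fin k → ℝ) →ᵃ[ℝ] ℝ)) :
    ∃ D : ℝ, 0 < D ∧ ∀ j x, |f j x| ≤ D * (1 + ‖x‖) := by
  let B : Fin N → ℝ := fun j => |f j 0| + ‖LinearMap.toContinuousLinearMap (f j).linear‖
  have hB : ∀ j, 0 ≤ B j := fun j => by positivity
  have hs : 0 ≤ ∑ i, B i := Finset.sum_nonneg (fun i _ => hB i)
  refine ⟨∑ j, B j + 1, by linarith, fun j x => ?_⟩
  have h1 : B j ≤ ∑ j, B j := Finset.single_le_sum (fun i _ => hB i) (Finset.mem_univ j)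
  have e := lin_add (f j) 0 x
  rw [zero_add] at e
  have h2 : |(f j).linear x| ≤ ‖LinearMap.toContinuousLinearMap (f j).linear‖ * ‖x‖ := by
    simpa using (LinearMap.toContinuousLinearMap (f j).linear).le_opNorm x
  have h3 := abs_nonneg (f j 0)
  have h4 := norm_nonneg x
  have h5 := norm_nonneg (LinearMap.toContinuousLinearMap (f j).linear)
  calc |f j x| ≤ |f j 0| + |(f j).linear x| := by rw [e]; exact abs_add_le _ _
    _ ≤ |f j 0| + ‖LinearMap.toContinuousLinearMap (f j).linear‖ * ‖x‖ := by gcongr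
    _ ≤ B j * (1 + ‖x‖) := by simp only [B]; nlinarith
    _ ≤ _ := by gcongr; linarith

lemma int_main (hk : 1 ≤ k) (hkN : k ≤ N)
    (f : Fin N → ((Fin k → ℝ) →ᵃ[ℝ] ℝ)) (hf : Generic f)
    (f0 : (Fin k → ℝ) →ₗ[ℝ] ℝ)
    (α : Fin N → ℝ) (hα : ∀ j, 0 < α j)
    (Sx : Finset (Fin N)) (X : Fin k → ℝ) (hX : IsVertexOf f Sx X)
    (l : ℝ) (hl : 0 < l) (T : Set (Fin k → ℝ))
    (hT : ∃ c C : ℝ, 0 < c ∧ ∀ x ∈ T, c * ‖x‖ - C ≤ f0 x) :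
    IntegrableOn
        (fun x : Fin k → ℝ => Real.exp (-l * f0 x) *
          (∏ j, |f j x| ^ α j) * (∏ j ∈ Sx, |f j x|)⁻¹) T volume := by
  obtain ⟨c, C, hc, hT⟩ := hT
  have hf0c : Continuous f0 := f0.continuous_of_finiteDimensional
  have hfc : ∀ j, Continuous (f j) := fun j => (f j).continuous_of_finiteDimensional
  have hmeas : MeasurableSet {x : Fin k → ℝ | c * ‖x‖ - C ≤ f0 x} :=
    (isClosed_le (by fun_prop) hf0c).measurableSet
  refine IntegrableOn.mono_set (t := {x : Fin k → ℝ | c * ‖x‖ - C ≤ f0 x}) ?_ hT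
  obtain ⟨D, hD, hfD⟩ := aff_bd (hk.trans hkN) f
  have hN : (0:ℝ) < N := by exact_mod_cast (by omega : 0 < N)
  set δ := l * c / (N * D) with hδdef
  have hδ : 0 < δ := by positivity
  choose K hK0 hK using fun j => rpow_bd (α j) δ (hα j) hδ
  have hI := int_prod f hf Sx X hX (fun j y => Real.exp (-δ * |y|) * |y| ^ α j * |y|⁻¹)
    (fun j => int1 (α j) δ (hα j) hδ)
  refine Integrable.mono' ((hI.const_mul
    (Real.exp (l * C) * Real.exp (l * c) * ∏ j ∈ Sxᶜ, K j)).integrableOn) ?_ ?_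
  · apply Measurable.aestronglyMeasurable
    have h0 := hf0c.measurable
    have h1 := fun j => (hfc j).measurable
    have h2 : ∀ j, Measurable (fun x => |f j x|) := fun j => (continuous_abs.comp (hfc j)).measurable
    refine ((Real.measurable_exp.comp (h0.const_mul _)).mul ?_).mul ?_
    · exact Finset.measurable_fun_prod _ (fun j _ => (h2 j).pow_const _)
    · exact (Finset.measurable_fun_prod _ (fun j _ => h2 j)).inv
  · refine (ae_restrict_iff' hmeas).2 (Eventually.of_forall fun x hx => ?_)
    have hx' : c * ‖x‖ - C ≤ f0 x := hx
    rw [Real.norm_of_nonneg (by positivity)]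
    have hexp : Real.exp (-l * f0 x) ≤ Real.exp (l * C) * Real.exp (l * c) *
        ∏ j, Real.exp (-δ * |f j x|) := by
      rw [← Real.exp_sum, ← Real.exp_add, ← Real.exp_add]
      apply Real.exp_le_exp.2
      have h1 : ∑ j, |f j x| ≤ N * (D * (1 + ‖x‖)) := by
        have := Finset.sum_le_card_nsmul Finset.univ (fun j => |f j x|) _ (fun j _ => hfD j x)
        simpa using this
      have h2 : δ * (N * (D * (1 + ‖x‖))) = l * c * (1 + ‖x‖) := by
        rw [hδdef]; field_simp
      have h3 := mul_le_mul_of_nonneg_left h1 hδ.le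
      have h4 := mul_le_mul_of_nonneg_left hx' hl.le
      rw [← Finset.mul_sum]
      nlinarith
    have hsplit : (∏ j, Real.exp (-δ * |f j x|)) * (∏ j, |f j x| ^ α j) * (∏ j ∈ Sx, |f j x|)⁻¹
        = (∏ j ∈ Sxᶜ, (Real.exp (-δ * |f j x|) * |f j x| ^ α j)) *
          ∏ j ∈ Sx, (Real.exp (-δ * |f j x|) * |f j x| ^ α j * |f j x|⁻¹) := by
      rw [← Finset.prod_mul_distrib, ← Finset.prod_compl_mul_prod Sx,
        Finset.prod_mul_distrib (s := Sx) (g := fun j => |f j x|⁻¹), Finset.prod_inv_distrib]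
      ring
    have hle : ∏ j ∈ Sxᶜ, (Real.exp (-δ * |f j x|) * |f j x| ^ α j) ≤ ∏ j ∈ Sxᶜ, K j :=
      Finset.prod_le_prod (fun j _ => by positivity) (fun j _ => hK j _ (abs_nonneg _))
    calc Real.exp (-l * f0 x) * (∏ j, |f j x| ^ α j) * (∏ j ∈ Sx, |f j x|)⁻¹
        ≤ (Real.exp (l * C) * Real.exp (l * c) * ∏ j, Real.exp (-δ * |f j x|)) *
          (∏ j, |f j x| ^ α j) * (∏ j ∈ Sx, |f j x|)⁻¹ := by gcongr
      _ = Real.exp (l * C) * Real.exp (l * c) * ((∏ j, Real.exp (-δ * |f j x|)) *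
          (∏ j, |f j x| ^ α j) * (∏ j ∈ Sx, |f j x|)⁻¹) := by ring
      _ = Real.exp (l * C) * Real.exp (l * c) *
          ((∏ j ∈ Sxᶜ, (Real.exp (-δ * |f j x|) * |f j x| ^ α j)) *
          ∏ j ∈ Sx, (Real.exp (-δ * |f j x|) * |f j x| ^ α j * |f j x|⁻¹)) := by rw [hsplit]
      _ ≤ Real.exp (l * C) * Real.exp (l * c) * ((∏ j ∈ Sxᶜ, K j) *
          ∏ j ∈ Sx, (Real.exp (-δ * |f j x|) * |f j x| ^ α j * |f j x|⁻¹)) := by gcongr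
      _ = _ := by ring

/-- for a vertex `X`, `Re λ > 0` and weights `α j > 0`, the function
`x ↦ e^{-Re(λ) f0 x} (∏ j |f j x| ^ α j) (∏_{j ∈ X} |f j x|)⁻¹` is Lebesgue-integrable
on every arrangement domain `Δ ∈ 𝒟⁺` and on the cone `C⁺_X`. -/
theorem stmt_17 {k N : ℕ} (hk : 1 ≤ k) (hkN : k ≤ N)
    (f : Fin N → ((Fin k → ℝ) →ᵃ[ℝ] ℝ)) (hf : Generic f)
    (f0 : (Fin k → ℝ) →ₗ[ℝ] ℝ) (hf0 : GenericLin f f0)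
    (α : Fin N → ℝ) (hα : ∀ j, 0 < α j)
    (Sx : Finset (Fin N)) (X : Fin k → ℝ) (hX : IsVertexOf f Sx X)
    (lam : ℂ) (hlam : 0 < lam.re) :
    (∀ Δ : Set (Fin k → ℝ), MemDplus f f0 Δ →
      IntegrableOn
        (fun x : Fin k → ℝ => Real.exp (-lam.re * f0 x) *
          (∏ j, |f j x| ^ α j) * (∏ j ∈ Sx, |f j x|)⁻¹) Δ volume) ∧
    (∀ C : Set (Fin k → ℝ), IsPosCone f f0 Sx X C →
      IntegrableOn
        (fun x : Fin k → ℝ => Real.exp (-lam.re * f0 x) *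
          (∏ j, |f j x| ^ α j) * (∏ j ∈ Sx, |f j x|)⁻¹) C volume) := by
  constructor
  · rintro Δ ⟨⟨y, hy, rfl⟩, b, hb⟩
    apply int_main hk hkN f hf f0 α hα Sx X hX lam.re hlam
    have hset : HypCompl f = {z : Fin k → ℝ | ∀ j ∈ (Finset.univ : Finset (Fin N)), f j z ≠ 0} := by
      ext z
      simp [HypCompl]
    rw [hset] at hb ⊢
    exact coercive hk hkN f hf f0 hf0 Finset.univ (by simpa using hkN) y (fun j _ => hy j) b
      (fun x hx => hb ⟨x, hx, rfl⟩)
  · rintro C ⟨⟨y, hy, rfl⟩, hpos⟩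
    apply int_main hk hkN f hf f0 α hα Sx X hX lam.re hlam
    exact coercive hk hkN f hf f0 hf0 Sx hX.1.ge y hy (f0 X) (fun x hx => (hpos x hx).le)

end HypArr
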